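/- arXiv:1903.03164 — 8 statements merged into one kernel-verified Lean document; each statement's English description precedes it below -/
import Mathlib

section
/- Let n ≥ 3 and suppose the rates R_1, …, R_n are sustainable with respect to uplink capacities C_u and downlink capacities C_d. Then there exists a nonnegative matrix of sub-stream rates r : {1,…,n} × {1,…,n} → ℝ such that: (i) for every i, ∑_{j=1}^n r_{i,j} = R_i (valid partition); (ii) for every i, the total uplink usage R_i + (n−2)·∑_{k=1}^n r_{k,i} ≤ C_u(i) (uplink capacity); and (iii) for every i, the total downlink usage ∑_{k ≠ i} ∑_{j=1}^n r_{k,j} ≤ C_d(i) (downlink capacity). (This is the rate-matrix formulation of Theorem 1: each sub-stream s_{i,j} is broadcast by a tree of height at most 2 rooted at v_i that first sends to v_j, which relays to the remaining n−2 sites, and s_{i,i} is sent directly from v_i to all others; the stated bandwidth usages encode exactly these height-≤2 trees.) -/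
open Finset

/-- Inner loop of Algorithm 1: processes the column indices `js` in order,
starting from remaining rate `R'` and residual uplink bandwidths `U`.
For each `j`: if `(n-2)·R' > U j` then `r := U j / (n-2)` else `r := R'`;
then `U j` decreases by `(n-2)·r` and `R'` by `r`; exit early once `R' = 0`.
Returns the assigned row of sub-stream rates and the updated residual uplinks. -/
noncomputable def innerLoop (n : ℕ) : ℝ → (Fin n → ℝ) → List (Fin n) → (Fin n → ℝ) × (Fin n → ℝ)
  | _, U, [] => (fun _ => 0, U)
  | R', U, j :: js =>
      let rij : ℝ := if (n - 2 : ℝ) * R' > U j then U j / (n - 2 : ℝ) else R'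
      let U' : Fin n → ℝ := Function.update U j (U j - (n - 2 : ℝ) * rij)
      if R' - rij = 0 then
        (Function.update (fun _ => (0 : ℝ)) j rij, U')
      else
        let rest := innerLoop n (R' - rij) U' js
        (Function.update rest.1 j rij, rest.2)

/-- Outer loop of Algorithm 1 over the list `is` of row indices, carrying the
rate matrix `r` computed so far and the residual uplinks `U`. -/
noncomputable def outerLoop (n : ℕ) (R : Fin n → ℝ) :
    (Fin n → Fin n → ℝ) → (Fin n → ℝ) → List (Fin n) → (Fin n → Fin n → ℝ) × (Fin n → ℝ)
  | r, U, [] => (r, U)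
  | r, U, i :: is =>
      let res := innerLoop n (R i) U (List.finRange n)
      outerLoop n R (Function.update r i res.1) res.2 is

/-- The matrix of sub-stream rates output by Algorithm 1, with initial
residual uplinks `U j := Cu j - R j` and rows/columns processed in order. -/
noncomputable def algOutput (n : ℕ) (Cu R : Fin n → ℝ) : Fin n → Fin n → ℝ :=
  (outerLoop n R (fun _ _ => 0) (fun j => Cu j - R j) (List.finRange n)).1

/-- `Ustart n Cu R k i` is the residual uplink bandwidth `U_i` after the first `k`
outer-loop iterations of Algorithm 1, i.e. the value `U_i[k+1]` at the start of
(1-indexed) outer-loop iteration `k+1`. -/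
noncomputable def Ustart (n : ℕ) (Cu R : Fin n → ℝ) (k : ℕ) : Fin n → ℝ :=
  (outerLoop n R (fun _ _ => 0) (fun j => Cu j - R j) ((List.finRange n).take k)).2

/-- The rates `R` are sustainable w.r.t. uplink capacities `Cu` and downlink
capacities `Cd`: (1) `R i ≤ Cu i`; (2) `∑_{j ≠ i} R j ≤ Cd i`;
(3) `(n-1)·∑ R ≤ ∑ Cu`. -/
def Sustainable (n : ℕ) (Cu Cd R : Fin n → ℝ) : Prop :=
  (∀ i, R i ≤ Cu i) ∧
  (∀ i : Fin n, ∑ j ∈ Finset.univ.erase i, R j ≤ Cd i) ∧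
  ((n : ℝ) - 1) * (∑ i, R i) ≤ ∑ i, Cu i

/-!
Site `j` has uplink `Cu j - R j` left after sending its own stream once, hence can relay at total
rate `b j = (Cu j - R j) / (n - 2)`, and sustainability says `∑ R ≤ ∑ b`. Splitting every stream
among all sites in proportion to `b` loads each relay at the fraction `∑ R / ∑ b ≤ 1` of its
capacity. Downlink usage is the same for every partition of the streams.
-/

section ProportionalAllocation

variable {ι κ 𝕜 : Type*} [Fintype κ] [Field 𝕜]

/-- The transport plan in which each source `i` splits its supply `a i` among the sinks `j` in
proportion to their capacities `b j`. If the capacities sum to zero, division by zero makes it the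
zero plan. -/
def proportionalAllocation (a : ι → 𝕜) (b : κ → 𝕜) (i : ι) (j : κ) : 𝕜 :=
  a i * b j / ∑ k, b k

theorem sum_proportionalAllocation_right (a : ι → 𝕜) (b : κ → 𝕜) {i : ι}
    (h : ∑ j, b j = 0 → a i = 0) : ∑ j, proportionalAllocation a b i j = a i := by
  simp only [proportionalAllocation]
  rw [← sum_div, ← mul_sum, mul_div_cancel_of_imp h]

theorem sum_proportionalAllocation_left [Fintype ι] (a : ι → 𝕜) (b : κ → 𝕜) (j : κ) :
    ∑ i, proportionalAllocation a b i j = (∑ i, a i) * b j / ∑ k, b k := by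
  simp only [proportionalAllocation, ← sum_div, ← sum_mul]

variable [LinearOrder 𝕜] [IsStrictOrderedRing 𝕜]

theorem proportionalAllocation_nonneg {a : ι → 𝕜} {b : κ → 𝕜} {i : ι} (ha : 0 ≤ a i)
    (hb : ∀ j, 0 ≤ b j) (j : κ) : 0 ≤ proportionalAllocation a b i j :=
  div_nonneg (mul_nonneg ha (hb j)) (sum_nonneg fun k _ ↦ hb k)

theorem exists_nonneg_sum_eq_sum_le [Fintype ι] {a : ι → 𝕜} {b : κ → 𝕜} (ha : ∀ i, 0 ≤ a i)
    (hb : ∀ j, 0 ≤ b j) (hab : ∑ i, a i ≤ ∑ j, b j) :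
    ∃ r : ι → κ → 𝕜,
      (∀ i j, 0 ≤ r i j) ∧ (∀ i, ∑ j, r i j = a i) ∧ ∀ j, ∑ i, r i j ≤ b j := by
  refine ⟨proportionalAllocation a b, fun i ↦ proportionalAllocation_nonneg (ha i) hb,
    fun i ↦ sum_proportionalAllocation_right a b fun hb_zero ↦ ?_, fun j ↦ ?_⟩
  · have le_zero : a i ≤ 0 :=
      (single_le_sum (fun k _ ↦ ha k) (mem_univ i)).trans (hab.trans_eq hb_zero)
    exact le_zero.antisymm (ha i)
  · calc
      ∑ i, proportionalAllocation a b i j = (∑ i, a i) * b j / ∑ k, b k :=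
        sum_proportionalAllocation_left a b j
      _ ≤ b j := div_le_of_le_mul₀ (sum_nonneg fun k _ ↦ hb k) (hb j) <| by
        rw [mul_comm (b j)]
        exact mul_le_mul_of_nonneg_right hab (hb j)

end ProportionalAllocation

/-- `c` is the uplink cost of relaying one unit of rate, `n - 2` in a network of `n` sites. -/
theorem theorem_one_general {ι 𝕜 : Type*} [Fintype ι] [DecidableEq ι] [Field 𝕜] [LinearOrder 𝕜]
    [IsStrictOrderedRing 𝕜] {c : 𝕜} (hc : 0 < c) {Cu Cd R : ι → 𝕜} (hR : ∀ i, 0 ≤ R i)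
    (hup : ∀ i, R i ≤ Cu i) (hdown : ∀ i, ∑ j ∈ univ.erase i, R j ≤ Cd i)
    (htotal : (c + 1) * ∑ i, R i ≤ ∑ i, Cu i) :
    ∃ r : ι → ι → 𝕜,
      (∀ i j, 0 ≤ r i j) ∧
      (∀ i, ∑ j, r i j = R i) ∧
      (∀ i, R i + c * ∑ k, r k i ≤ Cu i) ∧
      (∀ i, ∑ k ∈ univ.erase i, ∑ j, r k j ≤ Cd i) := by
  have relay_nonneg (i : ι) : 0 ≤ (Cu i - R i) / c := div_nonneg (sub_nonneg.2 (hup i)) hc.le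
  have supply_le_relay : ∑ i, R i ≤ ∑ i, (Cu i - R i) / c := by
    rw [← sum_div, sum_sub_distrib, le_div_iff₀' hc]
    linarith
  obtain ⟨r, r_nonneg, r_row, r_col⟩ :=
    exists_nonneg_sum_eq_sum_le hR relay_nonneg supply_le_relay
  refine ⟨r, r_nonneg, r_row, fun i ↦ ?_, fun i ↦ ?_⟩
  · linarith [(le_div_iff₀' hc).1 (r_col i)]
  · simpa only [r_row] using hdown i

/-- **Theorem 1, rate-matrix form.** If `n ≥ 3` and the rates `R`
are sustainable, there exists a nonnegative matrix `r` of sub-stream rates with: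
(i) each row sums to `R i`; (ii) `R i + (n-2)·∑_k r k i ≤ Cu i` (uplink usage of
the height-≤2 trees); (iii) `∑_{k ≠ i} ∑_j r k j ≤ Cd i` (downlink usage). -/
theorem theorem_one (n : ℕ) (hn : 3 ≤ n) (Cu Cd R : Fin n → ℝ)
    (hCu : ∀ i, 0 < Cu i) (hCd : ∀ i, 0 < Cd i) (hR : ∀ i, 0 < R i)
    (hsus : Sustainable n Cu Cd R) :
    ∃ r : Fin n → Fin n → ℝ,
      (∀ i j, 0 ≤ r i j) ∧
      (∀ i, ∑ j, r i j = R i) ∧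
      (∀ i, R i + ((n : ℝ) - 2) * (∑ k, r k i) ≤ Cu i) ∧
      (∀ i : Fin n, ∑ k ∈ Finset.univ.erase i, ∑ j, r k j ≤ Cd i) := by
  have relay_cost_pos : (0 : ℝ) < n - 2 := by linarith [show (3 : ℝ) ≤ n from mod_cast hn]
  exact theorem_one_general relay_cost_pos (fun i ↦ (hR i).le) hsus.1 hsus.2.1
    (by linarith [hsus.2.2])
end

section
/- For every outer-loop iteration index α with 1 ≤ α ≤ n of Algorithm 1: if ∑_{i=1}^n U_i[α] ≥ (n−2)·R_α, then at the end of iteration α of the outer loop, ∑_{i=1}^n r_{α,i} = R_α. -/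
open Finset

/-!
If `(n - 2) * R_α` is at most the total residual uplink at the start of row `α`, then the inequality
`(n - 2) * R' ≤ ∑ U_j` over the columns still to be visited persists while the row is being filled:
a column that cannot carry all of `R'` is exhausted, which removes the same amount `U_j` from both
sides. When a single column is left, the inequality says that it can carry the remainder. Hence some
column takes all of what is left, and the row sums to `R_α`.
-/

theorem sum_update_of_apply_eq_zero {ι M : Type*} [Fintype ι] [DecidableEq ι] [AddCommMonoid M]
    {f : ι → M} {j : ι} (hf : f j = 0) (x : M) :
    ∑ i, Function.update f j x i = x + ∑ i, f i := by
  rw [Finset.sum_update_of_mem (mem_univ j), Fintype.sum_eq_add_sum_compl j f, hf, zero_add,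
    Finset.compl_eq_univ_sdiff]

theorem natCast_sub_two_ne_zero {n : ℕ} (hn : n ≠ 2) : (n : ℝ) - 2 ≠ 0 :=
  sub_ne_zero.2 (by exact_mod_cast hn)

section InnerLoop

variable {n : ℕ} {R' : ℝ} {U : Fin n → ℝ} {j : Fin n}

theorem innerLoop_fst_cons_of_le (h : ((n : ℝ) - 2) * R' ≤ U j) (js : List (Fin n)) :
    (innerLoop n R' U (j :: js)).1 = Pi.single j R' := by
  simp only [innerLoop, gt_iff_lt, if_neg h.not_gt, sub_self, if_true]
  rfl

theorem innerLoop_fst_cons_of_lt (hn : n ≠ 2) (h : U j < ((n : ℝ) - 2) * R') (js : List (Fin n)) :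
    (innerLoop n R' U (j :: js)).1 =
      Function.update (innerLoop n (R' - U j / (n - 2)) (Function.update U j 0) js).1 j
        (U j / (n - 2)) := by
  have hc : (n : ℝ) - 2 ≠ 0 := natCast_sub_two_ne_zero hn
  have hrem : R' - U j / (n - 2) ≠ 0 :=
    sub_ne_zero.2 fun hR' => h.ne' (by rw [hR', mul_div_cancel₀ _ hc])
  simp only [innerLoop, gt_iff_lt, if_pos h, if_neg hrem, mul_div_cancel₀ _ hc, sub_self]

theorem innerLoop_fst_apply_of_notMem {i : Fin n} {js : List (Fin n)} (hi : i ∉ js) (R' : ℝ)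
    (U : Fin n → ℝ) : (innerLoop n R' U js).1 i = 0 := by
  induction js generalizing R' U with
  | nil => rfl
  | cons j js ih =>
    obtain ⟨hij, hi⟩ := List.ne_and_not_mem_of_not_mem_cons hi
    simp only [innerLoop]
    split_ifs <;> simp [Function.update_of_ne hij, ih hi]

theorem sum_innerLoop_fst (hn : n ≠ 2) {js : List (Fin n)} (hne : js ≠ []) (hjs : js.Nodup)
    (h : ((n : ℝ) - 2) * R' ≤ (js.map U).sum) :
    ∑ i, (innerLoop n R' U js).1 i = R' := by
  induction js generalizing R' U with
  | nil => contradiction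
  | cons j js ih =>
    obtain ⟨hj, hjs⟩ := List.nodup_cons.1 hjs
    rw [List.map_cons, List.sum_cons] at h
    rcases le_or_gt (((n : ℝ) - 2) * R') (U j) with hfit | hfull
    · rw [innerLoop_fst_cons_of_le hfit, Fintype.sum_pi_single']
    · have hne : js ≠ [] := by
        rintro rfl
        simp only [List.map_nil, List.sum_nil, add_zero] at h
        exact h.not_gt hfull
      have hinv : ((n : ℝ) - 2) * (R' - U j / (n - 2)) ≤
          (js.map (Function.update U j 0)).sum := by
        rw [hjs.map_update, if_neg hj, mul_sub, mul_div_cancel₀ _ (natCast_sub_two_ne_zero hn)]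
        linarith
      rw [innerLoop_fst_cons_of_lt hn hfull,
        sum_update_of_apply_eq_zero (innerLoop_fst_apply_of_notMem hj _ _), ih hne hjs hinv,
        add_sub_cancel]

end InnerLoop

section OuterLoop

variable {n : ℕ} (R : Fin n → ℝ) (r : Fin n → Fin n → ℝ) (U : Fin n → ℝ)

theorem outerLoop_append (is₁ is₂ : List (Fin n)) :
    outerLoop n R r U (is₁ ++ is₂) =
      outerLoop n R (outerLoop n R r U is₁).1 (outerLoop n R r U is₁).2 is₂ := by
  induction is₁ generalizing r U with
  | nil => rfl
  | cons i _ ih => exact ih _ _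

theorem outerLoop_fst_apply_of_notMem {i : Fin n} {is : List (Fin n)} (hi : i ∉ is) :
    (outerLoop n R r U is).1 i = r i := by
  induction is generalizing r U with
  | nil => rfl
  | cons j is ih =>
    obtain ⟨hij, hi⟩ := List.ne_and_not_mem_of_not_mem_cons hi
    rw [outerLoop, ih _ _ hi, Function.update_of_ne hij]

theorem outerLoop_fst_append_cons_self {i : Fin n} {is₂ : List (Fin n)} (hi : i ∉ is₂)
    (is₁ : List (Fin n)) :
    (outerLoop n R r U (is₁ ++ i :: is₂)).1 i =
      (innerLoop n (R i) (outerLoop n R r U is₁).2 (List.finRange n)).1 := by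
  rw [outerLoop_append, outerLoop, outerLoop_fst_apply_of_notMem _ _ _ hi, Function.update_self]

theorem outerLoop_fst_getElem {is : List (Fin n)} (his : is.Nodup) {k : ℕ} (hk : k < is.length) :
    (outerLoop n R r U is).1 is[k] =
      (innerLoop n (R is[k]) (outerLoop n R r U (is.take k)).2 (List.finRange n)).1 := by
  have hsplit : is.take k ++ is[k] :: is.drop (k + 1) = is := by
    rw [← List.drop_eq_getElem_cons hk, List.take_append_drop]
  have hlater : is[k] ∉ is.drop (k + 1) := by
    rw [← hsplit] at his
    exact (List.nodup_cons.1 his.of_append_right).1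
  rw [← outerLoop_fst_append_cons_self R r U hlater (is.take k), hsplit]

end OuterLoop

theorem proposition_one_general {n : ℕ} (hn : n ≠ 2) (R : Fin n → ℝ) (r : Fin n → Fin n → ℝ)
    (U : Fin n → ℝ) {is : List (Fin n)} (his : is.Nodup) {k : ℕ} (hk : k < is.length)
    (h : ((n : ℝ) - 2) * R is[k] ≤ ∑ j, (outerLoop n R r U (is.take k)).2 j) :
    ∑ j, (outerLoop n R r U is).1 is[k] j = R is[k] := by
  have hne : List.finRange n ≠ [] := List.ne_nil_of_mem (List.mem_finRange is[k])
  rw [Fin.sum_univ_def] at h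
  rw [outerLoop_fst_getElem R r U his hk]
  exact sum_innerLoop_fst hn hne (List.nodup_finRange n) h

/-- **Proposition 1.** For every outer-loop iteration `α`
(1-indexed, `1 ≤ α ≤ n`): if `∑_i U_i[α] ≥ (n-2)·R_α`, then at the end of
iteration `α` the row `α` of the rate matrix sums to `R_α` (row `α` is never
modified after iteration `α`, so we may read it off the final output). -/
theorem proposition_one (n : ℕ) (hn : 3 ≤ n) (Cu R : Fin n → ℝ)
    (hCu : ∀ i, 0 < Cu i) (hR : ∀ i, 0 < R i)
    (α : ℕ) (hα1 : 1 ≤ α) (hαn : α ≤ n)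
    (h : ((n : ℝ) - 2) * R ⟨α - 1, by omega⟩ ≤ ∑ i, Ustart n Cu R (α - 1) i) :
    ∑ i, algOutput n Cu R ⟨α - 1, by omega⟩ i = R ⟨α - 1, by omega⟩ := by
  have hk : α - 1 < (List.finRange n).length := by rw [List.length_finRange]; omega
  simpa [algOutput] using proposition_one_general (by omega) R (fun _ _ => 0)
    (fun j => Cu j - R j) (List.nodup_finRange n) hk (by simpa [Ustart] using h)
end

section
/- Suppose the rates R_1, …, R_n are sustainable. Then for every α with 1 ≤ α ≤ n, the residual uplink bandwidths of Algorithm 1 satisfy ∑_{i=1}^n U_i[α] ≥ (n−2)·∑_{i=α}^n R_i. -/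
open Finset

/-! Each step of the inner loop preserves `∑ U - (n - 2) R'`, and the rate `R'` left over at the end
of a row is nonnegative because the assigned rate never exceeds `R'`. Hence row `i` lowers the total
residual uplink bandwidth by at most `(n - 2) R i`. Since `(n - 1) ∑ R ≤ ∑ Cu`, that total starts
from `∑ Cu - ∑ R ≥ (n - 2) ∑ R`, and the rows not yet processed remain covered. -/

theorem ite_gt_div_eq_min {K : Type*} [Field K] [LinearOrder K] [IsStrictOrderedRing K] {c : K}
    (hc : 0 < c) (x u : K) : (if c * x > u then u / c else x) = min (u / c) x := by
  split_ifs with h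
  · exact (min_eq_left ((div_le_iff₀' hc).2 h.le)).symm
  · exact (min_eq_right ((le_div_iff₀' hc).2 (not_lt.1 h))).symm

theorem sum_update_sub {ι M : Type*} [Fintype ι] [DecidableEq ι] [AddCommGroup M]
    (f : ι → M) (i : ι) (a : M) :
    ∑ j, Function.update f i (f i - a) j = ∑ j, f j - a := by
  rw [sum_update_of_mem (mem_univ i), sub_add_eq_add_sub,
    ← sum_eq_add_sum_sdiff_singleton_of_mem (mem_univ i)]

theorem sum_sub_mul_le_sum_innerLoop {n : ℕ} (hn : 3 ≤ n) (R' : ℝ) (U : Fin n → ℝ)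
    (js : List (Fin n)) (hR' : js = [] → 0 ≤ R') :
    ∑ i, U i - ((n : ℝ) - 2) * R' ≤ ∑ i, (innerLoop n R' U js).2 i := by
  have hc : (0 : ℝ) < n - 2 := sub_pos.2 (by exact_mod_cast hn)
  induction js generalizing R' U with
  | nil => exact sub_le_self _ (mul_nonneg hc.le (hR' rfl))
  | cons j js ih =>
    simp only [innerLoop, ite_gt_div_eq_min hc]
    set r := min (U j / ((n : ℝ) - 2)) R'
    have assigned_le : r ≤ R' := min_le_right _ _
    have sum_step := sum_update_sub U j (((n : ℝ) - 2) * r)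
    split_ifs with h_exit
    · rw [sum_step, sub_eq_zero.1 h_exit]
    · calc ∑ i, U i - ((n : ℝ) - 2) * R'
          = ∑ i, Function.update U j (U j - ((n : ℝ) - 2) * r) i - ((n : ℝ) - 2) * (R' - r) := by
            rw [sum_step]; ring
        _ ≤ ∑ i, (innerLoop n (R' - r) (Function.update U j (U j - ((n : ℝ) - 2) * r)) js).2 i :=
            ih _ _ fun _ ↦ sub_nonneg.2 assigned_le

theorem sum_sub_mul_le_sum_outerLoop {n : ℕ} (hn : 3 ≤ n) (R : Fin n → ℝ) (r : Fin n → Fin n → ℝ)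
    (U : Fin n → ℝ) (is : List (Fin n)) :
    ∑ i, U i - ((n : ℝ) - 2) * (is.map R).sum ≤ ∑ i, (outerLoop n R r U is).2 i := by
  induction is generalizing r U with
  | nil => simp [outerLoop]
  | cons i is ih =>
    have finRange_ne_nil : List.finRange n ≠ [] := by
      rw [Ne, List.finRange_eq_nil_iff]; lia
    set row := innerLoop n (R i) U (List.finRange n)
    calc ∑ j, U j - ((n : ℝ) - 2) * ((i :: is).map R).sum
        = ∑ j, U j - ((n : ℝ) - 2) * R i - ((n : ℝ) - 2) * (is.map R).sum := by
          rw [List.map_cons, List.sum_cons]; ring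
      _ ≤ ∑ j, row.2 j - ((n : ℝ) - 2) * (is.map R).sum :=
          sub_le_sub_right (sum_sub_mul_le_sum_innerLoop hn _ _ _ (absurd · finRange_ne_nil)) _
      _ ≤ ∑ j, (outerLoop n R r U (i :: is)).2 j := ih (Function.update r i row.1) row.2

theorem sum_map_take_finRange {M : Type*} [AddCommMonoid M] {n : ℕ} (f : Fin n → M) (k : ℕ) :
    (((List.finRange n).take k).map f).sum = ∑ i with i.val < k, f i := by
  rw [List.map_take, ← List.ofFn_eq_map, List.sum_take_ofFn]

theorem sum_sub_mul_le_sum_Ustart {n : ℕ} (hn : 3 ≤ n) (Cu R : Fin n → ℝ) (k : ℕ) :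
    ∑ i, (Cu i - R i) - ((n : ℝ) - 2) * ∑ i with i.val < k, R i ≤ ∑ i, Ustart n Cu R k i := by
  rw [← sum_map_take_finRange]
  exact sum_sub_mul_le_sum_outerLoop hn R _ _ _

theorem proposition_two_general (n : ℕ) (hn : 3 ≤ n) (Cu R : Fin n → ℝ)
    (hcap : ((n : ℝ) - 1) * ∑ i, R i ≤ ∑ i, Cu i) (k : ℕ) :
    ((n : ℝ) - 2) * ∑ i with k ≤ i.val, R i ≤ ∑ i, Ustart n Cu R k i := by
  have initial_total : ((n : ℝ) - 2) * ∑ i, R i ≤ ∑ i, (Cu i - R i) := by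
    rw [sum_sub_distrib]; linarith
  have split_rows : ∑ i with i.val < k, R i + ∑ i with k ≤ i.val, R i = ∑ i, R i := by
    simpa only [not_lt] using sum_filter_add_sum_filter_not univ (·.val < k) R
  calc ((n : ℝ) - 2) * ∑ i with k ≤ i.val, R i
      = ((n : ℝ) - 2) * ∑ i, R i - ((n : ℝ) - 2) * ∑ i with i.val < k, R i := by
        rw [← split_rows]; ring
    _ ≤ ∑ i, (Cu i - R i) - ((n : ℝ) - 2) * ∑ i with i.val < k, R i :=
        sub_le_sub_right initial_total _
    _ ≤ ∑ i, Ustart n Cu R k i := sum_sub_mul_le_sum_Ustart hn Cu R k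

/-- **Proposition 2.** If the rates are sustainable then for every
`α` with `1 ≤ α ≤ n`, `∑_i U_i[α] ≥ (n-2)·∑_{i=α}^{n} R_i` (here site `i : Fin n`
has 1-indexed position `i+1`). -/
theorem proposition_two (n : ℕ) (hn : 3 ≤ n) (Cu Cd R : Fin n → ℝ)
    (hCu : ∀ i, 0 < Cu i) (hCd : ∀ i, 0 < Cd i) (hR : ∀ i, 0 < R i)
    (hsus : Sustainable n Cu Cd R)
    (α : ℕ) (hα1 : 1 ≤ α) (hαn : α ≤ n) :
    ((n : ℝ) - 2) * (∑ i ∈ Finset.univ.filter (fun i : Fin n => α ≤ (i : ℕ) + 1), R i)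
      ≤ ∑ i, Ustart n Cu R (α - 1) i := by
  simpa only [tsub_le_iff_right] using proposition_two_general n hn Cu R hsus.2.2 (α - 1)
end

section
/- Suppose R_i ≤ C_u(i) for all i with 1 ≤ i ≤ n. Then throughout the execution of Algorithm 1 the residual uplink bandwidths remain nonnegative: U_i[α] ≥ 0 for all i and α with 1 ≤ i, α ≤ n. -/
open Finset

/-! A visit to column `j` replaces `U j` by `max 0 (U j - (n - 2) * R')`: the test in the algorithm
caps the rate exactly where the residual would become negative. Hence nonnegativity of the residuals
is an invariant of both loops, and the initial residuals `Cu j - R j` are nonnegative. -/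

theorem sub_mul_ite_div_eq_max {K : Type*} [Field K] [LinearOrder K] [IsStrictOrderedRing K]
    (c x : K) {u : K} (hu : 0 ≤ u) :
    u - c * (if c * x > u then u / c else x) = max 0 (u - c * x) := by
  split_ifs with h
  · have hc : c ≠ 0 := left_ne_zero_of_mul (hu.trans_lt h).ne'
    rw [mul_div_cancel₀ u hc, sub_self, max_eq_left (sub_nonpos.mpr h.le)]
  · rw [max_eq_right (sub_nonneg.mpr (not_lt.mp h))]

theorem update_sub_mul_ite_div_nonneg {ι K : Type*} [DecidableEq ι] [Field K] [LinearOrder K]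
    [IsStrictOrderedRing K] (c x : K) {U : ι → K} (hU : 0 ≤ U) (j : ι) :
    0 ≤ Function.update U j (U j - c * (if c * x > U j then U j / c else x)) := by
  rw [sub_mul_ite_div_eq_max c x (hU j)]
  exact le_update_iff.mpr ⟨le_max_left _ _, fun i _ => hU i⟩

theorem innerLoop_snd_nonneg {n : ℕ} (R' : ℝ) {U : Fin n → ℝ} (hU : 0 ≤ U) (js : List (Fin n)) :
    0 ≤ (innerLoop n R' U js).2 := by
  fun_induction innerLoop n R' U js with
  | case1 => exact hU
  | case2 => exact update_sub_mul_ite_div_nonneg _ _ hU _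
  | case3 _ _ _ _ _ _ _ _ ih => exact ih (update_sub_mul_ite_div_nonneg _ _ hU _)

theorem outerLoop_snd_nonneg {n : ℕ} (R : Fin n → ℝ) (r : Fin n → Fin n → ℝ) {U : Fin n → ℝ}
    (hU : 0 ≤ U) (l : List (Fin n)) : 0 ≤ (outerLoop n R r U l).2 := by
  induction l generalizing r U with
  | nil => exact hU
  | cons i _ ih => exact ih _ (innerLoop_snd_nonneg (R i) hU _)

/-- **Lemma 2.** If `R i ≤ Cu i` for all `i`, then the residual
uplink bandwidths stay nonnegative throughout Algorithm 1:
`U_i[α] ≥ 0` for all `1 ≤ i, α ≤ n`. -/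
theorem residual_nonneg (n : ℕ) (hn : 3 ≤ n) (Cu R : Fin n → ℝ)
    (hCu : ∀ i, 0 < Cu i) (hR : ∀ i, 0 < R i)
    (hRCu : ∀ i, R i ≤ Cu i) :
    ∀ (i : Fin n) (α : ℕ), 1 ≤ α → α ≤ n → 0 ≤ Ustart n Cu R (α - 1) i := by
  intro i α _ _
  have initial_nonneg : 0 ≤ fun j => Cu j - R j := fun j => sub_nonneg.mpr (hRCu j)
  exact outerLoop_snd_nonneg R _ initial_nonneg _ i
end

section
/- Suppose the rates R_1, …, R_n are sustainable. Then the output r of Algorithm 1 satisfies the Uplink Capacity Constraint: for every i with 1 ≤ i ≤ n, the total uplink usage at site i satisfies R_i + (n−2)·∑_{k=1}^n r_{k,i} ≤ C_u(i). -/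
open Finset

/-! At every site the residual uplink plus the uplink already handed out for relaying is conserved:
each assignment of a rate `ρ` in column `j` lowers `U j` by exactly `(n - 2) * ρ`. The choice of `ρ`
also keeps residuals nonnegative, so at site `i` the relayed traffic never exceeds the initial
residual `Cu i - R i`. -/

/-- The rate that Algorithm 1 assigns to a relay whose residual uplink is `u` when the rate `ρ` of
the stream is still to be placed; each unit of rate costs the relay `c` units of uplink. It is the
value `rij` of `innerLoop`, where `c = n - 2`. -/
noncomputable def relayRate (c ρ u : ℝ) : ℝ :=
  if c * ρ > u then u / c else ρ

theorem mul_relayRate_le (c ρ : ℝ) {u : ℝ} (hu : 0 ≤ u) : c * relayRate c ρ u ≤ u := by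
  unfold relayRate
  split_ifs with h
  · have hc : c ≠ 0 := by
      rintro rfl
      exact h.not_ge (by simpa using hu)
    exact (mul_div_cancel₀ u hc).le
  · exact not_lt.mp h

theorem sum_update_apply {ι κ M : Type*} [Fintype ι] [DecidableEq ι] [AddCommMonoid M]
    {r : ι → κ → M} {i : ι} {l : κ} (hr : r i l = 0) (row : κ → M) :
    ∑ k, Function.update r i row k l = row l + ∑ k, r k l := by
  simp_rw [Function.apply_update (fun _ (v : κ → M) => v l) r i row]
  rw [sum_update_of_mem (mem_univ i), sdiff_singleton_eq_erase,
    sum_erase (f := fun k => r k l) _ hr]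

section InnerLoop

variable {n : ℕ} (ρ : ℝ) {U : Fin n → ℝ} {l : Fin n}

theorem innerLoop_cons (U : Fin n → ℝ) (j : Fin n) (js : List (Fin n)) :
    innerLoop n ρ U (j :: js) =
      let x := relayRate (n - 2) ρ (U j)
      let U' := Function.update U j (U j - (n - 2) * x)
      if ρ - x = 0 then (Function.update (fun _ => 0) j x, U')
      else
        let rest := innerLoop n (ρ - x) U' js
        (Function.update rest.1 j x, rest.2) :=
  rfl

theorem innerLoop_residual_nonneg (hU : 0 ≤ U l) (js : List (Fin n)) :
    0 ≤ (innerLoop n ρ U js).2 l := by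
  induction js generalizing ρ U with
  | nil => exact hU
  | cons j js ih =>
    have hU' : 0 ≤ Function.update U j (U j - (n - 2) * relayRate (n - 2) ρ (U j)) l := by
      obtain rfl | hl := eq_or_ne l j
      · simpa using mul_relayRate_le _ ρ hU
      · simpa [hl] using hU
    rw [innerLoop_cons]
    dsimp only
    split_ifs
    · exact hU'
    · exact ih _ hU'

theorem innerLoop_rate_eq_zero_of_notMem (U : Fin n → ℝ) {js : List (Fin n)} (hl : l ∉ js) :
    (innerLoop n ρ U js).1 l = 0 := by
  induction js generalizing ρ U with
  | nil => rfl
  | cons j js ih =>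
    obtain ⟨hlj, hl⟩ := not_or.mp (List.mem_cons.not.mp hl)
    rw [innerLoop_cons]
    dsimp only
    split_ifs
    · simp [hlj]
    · simpa [hlj] using ih _ _ hl

theorem innerLoop_residual_add_mul_rate (U : Fin n → ℝ) (l : Fin n) {js : List (Fin n)}
    (hjs : js.Nodup) :
    (innerLoop n ρ U js).2 l + (n - 2) * (innerLoop n ρ U js).1 l = U l := by
  induction js generalizing ρ U with
  | nil => simp [innerLoop]
  | cons j js ih =>
    obtain ⟨hj, hjs⟩ := List.nodup_cons.mp hjs
    rw [innerLoop_cons]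
    dsimp only
    set x := relayRate (n - 2) ρ (U j)
    set U' := Function.update U j (U j - (n - 2) * x) with hU'
    have rest_balance := ih (ρ - x) U' hjs
    obtain rfl | hl := eq_or_ne l j
    · rw [innerLoop_rate_eq_zero_of_notMem _ _ hj, mul_zero, add_zero] at rest_balance
      have head_balance : U' l + (n - 2) * x = U l := by simp [hU']
      split_ifs
      · simpa using head_balance
      · simpa [rest_balance] using head_balance
    · split_ifs
      · simp [hU', hl]
      · simpa [hU', hl] using rest_balance

end InnerLoop

section OuterLoop

variable {n : ℕ} (R : Fin n → ℝ) {r : Fin n → Fin n → ℝ} {U : Fin n → ℝ} {l : Fin n}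

theorem outerLoop_residual_nonneg (r : Fin n → Fin n → ℝ) (hU : 0 ≤ U l) (is : List (Fin n)) :
    0 ≤ (outerLoop n R r U is).2 l := by
  induction is generalizing r U with
  | nil => exact hU
  | cons i _ ih => exact ih _ (innerLoop_residual_nonneg (R i) hU _)

theorem outerLoop_residual_add_mul_sum_rate (U : Fin n → ℝ) {is : List (Fin n)} (his : is.Nodup)
    (hr : ∀ k ∈ is, r k l = 0) :
    (outerLoop n R r U is).2 l + (n - 2) * ∑ k, (outerLoop n R r U is).1 k l =
      U l + (n - 2) * ∑ k, r k l := by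
  induction is generalizing r U with
  | nil => rfl
  | cons i is ih =>
    obtain ⟨hi, his⟩ := List.nodup_cons.mp his
    obtain ⟨hri, hr⟩ := List.forall_mem_cons.mp hr
    set res := innerLoop n (R i) U (List.finRange n)
    have hr' : ∀ k ∈ is, Function.update r i res.1 k l = 0 := fun k hk => by
      rw [Function.update_of_ne (ne_of_mem_of_not_mem hk hi), hr k hk]
    calc
      _ = res.2 l + (n - 2) * ∑ k, Function.update r i res.1 k l := ih res.2 his hr'
      _ = (res.2 l + (n - 2) * res.1 l) + (n - 2) * ∑ k, r k l := by
        rw [sum_update_apply hri, mul_add, add_assoc]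
      _ = U l + (n - 2) * ∑ k, r k l := by
        rw [innerLoop_residual_add_mul_rate _ _ _ (List.nodup_finRange n)]

end OuterLoop

theorem Ustart_nonneg {n : ℕ} {Cu R : Fin n → ℝ} {i : Fin n} (hi : R i ≤ Cu i) (k : ℕ) :
    0 ≤ Ustart n Cu R k i :=
  outerLoop_residual_nonneg (U := fun j => Cu j - R j) R _ (sub_nonneg.mpr hi) _

theorem Ustart_add_mul_sum_algOutput {n : ℕ} (Cu R : Fin n → ℝ) (i : Fin n) :
    Ustart n Cu R n i + (n - 2) * ∑ k, algOutput n Cu R k i = Cu i - R i := by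
  have balance := outerLoop_residual_add_mul_sum_rate (r := fun _ _ => 0) (l := i) R
    (fun j => Cu j - R j) (List.nodup_finRange n) (fun _ _ => rfl)
  simpa [Ustart, algOutput, List.take_of_length_le] using balance

theorem uplink_capacity_general (n : ℕ) (Cu R : Fin n → ℝ) (i : Fin n) (hi : R i ≤ Cu i) :
    R i + ((n : ℝ) - 2) * (∑ k, algOutput n Cu R k i) ≤ Cu i := by
  have residual_nonneg := Ustart_nonneg hi n
  have balance := Ustart_add_mul_sum_algOutput Cu R i
  linarith

/-- If the rates are sustainable then the output of Algorithm 1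
satisfies the Uplink Capacity Constraint: at every site `i` the total uplink
usage `R i + (n-2)·∑_k r k i` is at most `Cu i`. -/
theorem uplink_capacity (n : ℕ) (hn : 3 ≤ n) (Cu Cd R : Fin n → ℝ)
    (hCu : ∀ i, 0 < Cu i) (hCd : ∀ i, 0 < Cd i) (hR : ∀ i, 0 < R i)
    (hsus : Sustainable n Cu Cd R) :
    ∀ i : Fin n, R i + ((n : ℝ) - 2) * (∑ k, algOutput n Cu R k i) ≤ Cu i :=
  fun i => uplink_capacity_general n Cu R i (hsus.1 i)
end

section
/- Suppose the rates R_1, …, R_n are sustainable. Then the output r of Algorithm 1 satisfies the Downlink Capacity Constraint: for every i with 1 ≤ i ≤ n, the total downlink usage at site i satisfies ∑_{k ≠ i} ∑_{j=1}^n r_{k,j} ≤ C_d(i). -/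
open Finset

/-!
The amount assigned to column `j` is `min (U j / (n - 2)) R'`, so it never exceeds the remaining
rate `R'`, whatever the residual uplinks are. Hence the remaining rate stays nonnegative, and
since row `k` starts with `R k` to distribute, its entries sum to at most `R k`. The downlink
usage at `i` is therefore at most `∑ k ≠ i, R k`, which condition (2) bounds by `Cd i`.
-/

theorem ite_div_eq_min {K : Type*} [Field K] [LinearOrder K] [IsStrictOrderedRing K] {c : K}
    (hc : 0 < c) (u x : K) :
    (if c * x > u then u / c else x) = min (u / c) x := by
  simp only [min_def_lt, div_lt_iff₀' hc, gt_iff_lt]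

theorem sum_map_cons_update {α M : Type*} [DecidableEq α] [AddMonoid M] {a : α} {l : List α}
    (ha : a ∉ l) (f : α → M) (y : M) :
    ((a :: l).map (Function.update f a y)).sum = y + (l.map f).sum := by
  have map_update : l.map (Function.update f a y) = l.map f :=
    List.map_congr_left fun _ hb => Function.update_of_ne (ne_of_mem_of_not_mem hb ha) ..
  rw [List.map_cons, List.sum_cons, Function.update_self, map_update]

section Loops

variable {n : ℕ}

theorem sum_map_innerLoop_le (hn : 3 ≤ n) {js : List (Fin n)} (hjs : js.Nodup) {x : ℝ}
    (hx : 0 ≤ x) (U : Fin n → ℝ) : (js.map (innerLoop n x U js).1).sum ≤ x := by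
  have hc : (0 : ℝ) < n - 2 := sub_pos.2 (by exact_mod_cast hn)
  induction js generalizing x U with
  | nil => simpa using hx
  | cons j js ih =>
    obtain ⟨hj, hjs⟩ := List.nodup_cons.1 hjs
    simp only [innerLoop, ite_div_eq_min hc]
    set y := min (U j / (n - 2)) x
    have remaining_nonneg : 0 ≤ x - y := sub_nonneg.2 (min_le_right _ _)
    split_ifs
    · rw [sum_map_cons_update hj]
      simpa using remaining_nonneg
    · rw [sum_map_cons_update hj]
      linarith [ih hjs remaining_nonneg (Function.update U j (U j - (n - 2) * y))]

theorem sum_innerLoop_finRange_le (hn : 3 ≤ n) {x : ℝ} (hx : 0 ≤ x) (U : Fin n → ℝ) :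
    ∑ j, (innerLoop n x U (List.finRange n)).1 j ≤ x := by
  rw [Fin.sum_univ_def]
  exact sum_map_innerLoop_le hn (List.nodup_finRange n) hx U

theorem outerLoop_row_eq_or_exists_innerLoop (R : Fin n → ℝ) (r : Fin n → Fin n → ℝ)
    (U : Fin n → ℝ) (is : List (Fin n)) (k : Fin n) :
    (outerLoop n R r U is).1 k = r k ∨
      ∃ V, (outerLoop n R r U is).1 k = (innerLoop n (R k) V (List.finRange n)).1 := by
  induction is generalizing r U with
  | nil => exact .inl rfl
  | cons i is ih =>
    rw [outerLoop]
    refine (ih _ _).elim (fun h => ?_) .inr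
    obtain rfl | hki := eq_or_ne k i
    · exact .inr ⟨U, h.trans (Function.update_self ..)⟩
    · exact .inl (h.trans (Function.update_of_ne hki ..))

theorem sum_algOutput_row_le (hn : 3 ≤ n) (Cu : Fin n → ℝ) {R : Fin n → ℝ} {k : Fin n}
    (hRk : 0 ≤ R k) : ∑ j, algOutput n Cu R k j ≤ R k := by
  obtain h | ⟨V, h⟩ := outerLoop_row_eq_or_exists_innerLoop R (fun _ _ => 0)
    (fun j => Cu j - R j) (List.finRange n) k
  · simpa [algOutput, h] using hRk
  · simpa only [algOutput, h] using sum_innerLoop_finRange_le hn hRk V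

end Loops

theorem downlink_capacity_general (n : ℕ) (hn : 3 ≤ n) (Cu Cd R : Fin n → ℝ)
    (hR : ∀ i, 0 ≤ R i) (hdown : ∀ i, ∑ j ∈ Finset.univ.erase i, R j ≤ Cd i) :
    ∀ i : Fin n, ∑ k ∈ Finset.univ.erase i, ∑ j, algOutput n Cu R k j ≤ Cd i := fun i =>
  calc ∑ k ∈ Finset.univ.erase i, ∑ j, algOutput n Cu R k j
      ≤ ∑ k ∈ Finset.univ.erase i, R k :=
        Finset.sum_le_sum fun k _ => sum_algOutput_row_le hn Cu (hR k)
    _ ≤ Cd i := hdown i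

/-- If the rates are sustainable then the output of Algorithm 1
satisfies the Downlink Capacity Constraint: at every site `i` the total downlink
usage `∑_{k ≠ i} ∑_j r k j` is at most `Cd i`. -/
theorem downlink_capacity (n : ℕ) (hn : 3 ≤ n) (Cu Cd R : Fin n → ℝ)
    (hCu : ∀ i, 0 < Cu i) (hCd : ∀ i, 0 < Cd i) (hR : ∀ i, 0 < R i)
    (hsus : Sustainable n Cu Cd R) :
    ∀ i : Fin n, ∑ k ∈ Finset.univ.erase i, ∑ j, algOutput n Cu R k j ≤ Cd i := by
  exact downlink_capacity_general n hn Cu Cd R (fun i => (hR i).le) hsus.2.1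
end

section
/- Suppose R_i ≤ C_u(i) for all i with 1 ≤ i ≤ n. Then all sub-stream rates output by Algorithm 1 are nonnegative: r_{i,j} ≥ 0 for all i, j with 1 ≤ i, j ≤ n. -/
open Finset

/-!
Throughout the run, the rate still to be served and all residual uplink bandwidths stay
nonnegative: the rate put on a link lies between `0` and the rate still to be served, and costs at
most the residual bandwidth of that link. Initially the bandwidths are `Cu i - R i ≥ 0`.

The division by `c = n - 2` takes place only if `0 ≤ u < c * ρ`, where `u` is the residual
bandwidth and `ρ` the rate still to be served; as `0 ≤ ρ`, this forces `0 < c`.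
-/

theorem update_nonneg {ι : Type*} [DecidableEq ι] {α : ι → Type*} [∀ i, Preorder (α i)]
    [∀ i, Zero (α i)] {f : ∀ i, α i} (hf : 0 ≤ f) {i : ι} {a : α i} (ha : 0 ≤ a) :
    0 ≤ Function.update f i a :=
  le_update_iff.2 ⟨ha, fun k _ => hf k⟩

/-- The sub-stream rate that Algorithm 1 assigns to a single link, as a function of the uplink
cost `c` per unit of rate (there `n - 2`), the client rate `ρ` still to be served and the residual
uplink bandwidth `u`. -/
def greedyRate {𝕜 : Type*} [Field 𝕜] [LinearOrder 𝕜] (c ρ u : 𝕜) : 𝕜 :=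
  if c * ρ > u then u / c else ρ

section GreedyRate

variable {𝕜 : Type*} [Field 𝕜] [LinearOrder 𝕜] {c ρ u : 𝕜}

theorem mul_greedyRate_le (hu : 0 ≤ u) : c * greedyRate c ρ u ≤ u := by
  unfold greedyRate
  split_ifs with h
  · have hc : c ≠ 0 := left_ne_zero_of_mul (hu.trans_lt h).ne'
    exact (mul_div_cancel₀ u hc).le
  · exact not_lt.1 h

variable [IsStrictOrderedRing 𝕜]

theorem greedyRate_nonneg (hρ : 0 ≤ ρ) (hu : 0 ≤ u) : 0 ≤ greedyRate c ρ u := by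
  unfold greedyRate
  split_ifs with h
  · have hc : 0 < c := pos_of_mul_pos_left (hu.trans_lt h) hρ
    exact div_nonneg hu hc.le
  · exact hρ

theorem greedyRate_le (hρ : 0 ≤ ρ) (hu : 0 ≤ u) : greedyRate c ρ u ≤ ρ := by
  unfold greedyRate
  split_ifs with h
  · have hc : 0 < c := pos_of_mul_pos_left (hu.trans_lt h) hρ
    exact (div_le_iff₀' hc).2 h.le
  · exact le_rfl

theorem update_sub_mul_greedyRate_nonneg {ι : Type*} [DecidableEq ι] {U : ι → 𝕜} (hU : 0 ≤ U)
    (j : ι) : 0 ≤ Function.update U j (U j - c * greedyRate c ρ (U j)) :=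
  update_nonneg hU (sub_nonneg.2 (mul_greedyRate_le (hU j)))

end GreedyRate

theorem innerLoop_nonneg {n : ℕ} {ρ : ℝ} {U : Fin n → ℝ} (hρ : 0 ≤ ρ) (hU : 0 ≤ U)
    (js : List (Fin n)) : 0 ≤ innerLoop n ρ U js := by
  fun_induction innerLoop n ρ U js with
  | case1 ρ U => exact ⟨le_rfl, hU⟩
  | case2 ρ U j _ rate U' _ =>
    have hrate : 0 ≤ rate := greedyRate_nonneg hρ (hU j)
    have hU' : 0 ≤ U' := update_sub_mul_greedyRate_nonneg hU j
    exact ⟨update_nonneg le_rfl hrate, hU'⟩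
  | case3 ρ U j js rate U' _ rest ih =>
    have hrate : 0 ≤ rate := greedyRate_nonneg hρ (hU j)
    have hU' : 0 ≤ U' := update_sub_mul_greedyRate_nonneg hU j
    have hρ' : 0 ≤ ρ - rate := sub_nonneg.2 (greedyRate_le hρ (hU j))
    obtain ⟨hrow, hUrest⟩ : 0 ≤ rest := ih hρ' hU'
    exact ⟨update_nonneg hrow hrate, hUrest⟩

theorem outerLoop_nonneg {n : ℕ} {R : Fin n → ℝ} (hR : 0 ≤ R) {r : Fin n → Fin n → ℝ}
    {U : Fin n → ℝ} (hr : 0 ≤ r) (hU : 0 ≤ U) (is : List (Fin n)) :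
    0 ≤ outerLoop n R r U is := by
  fun_induction outerLoop n R r U is with
  | case1 r U => exact ⟨hr, hU⟩
  | case2 r U i is row ih =>
    obtain ⟨hrow, hU'⟩ : 0 ≤ row := innerLoop_nonneg (hR i) hU _
    exact ih (update_nonneg hr hrow) hU'

/-- If `R i ≤ Cu i` for all `i`, then every sub-stream rate
output by Algorithm 1 is nonnegative. -/
theorem rates_nonneg (n : ℕ) (hn : 3 ≤ n) (Cu R : Fin n → ℝ)
    (hCu : ∀ i, 0 < Cu i) (hR : ∀ i, 0 < R i)
    (hRCu : ∀ i, R i ≤ Cu i) :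
    ∀ i j : Fin n, 0 ≤ algOutput n Cu R i j := by
  have hU : 0 ≤ fun j => Cu j - R j := fun j => sub_nonneg.2 (hRCu j)
  exact (outerLoop_nonneg (fun i => (hR i).le) le_rfl hU (List.finRange n)).1
end

section
/- For every i with 1 ≤ i ≤ n, the sub-stream rates assigned by Algorithm 1 during outer-loop iteration i never over-allocate the stream: ∑_{j=1}^n r_{i,j} ≤ R_i (no sustainability assumption needed, only R_i > 0 and R_j ≤ C_u(j) for all j). -/
open Finset

/-!
The rate `r` assigned in an inner-loop step is at most the remaining rate `R'`: it is either `R'`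
itself or `u / (n - 2)`, and the latter only when the residual uplink `u` is below `(n - 2) R'`.
So every step leaves a nonnegative remainder `R' - r`. The rates assigned in a row telescope to
the initial rate minus the last remainder, which is nonnegative once a single step has been made.
-/

theorem sum_update_of_eq_zero {ι M : Type*} [Fintype ι] [DecidableEq ι] [AddCommMonoid M]
    {f : ι → M} {i : ι} (hi : f i = 0) (a : M) :
    ∑ j, Function.update f i a j = a + ∑ j, f j := by
  rw [sum_update_of_mem (mem_univ i), sdiff_singleton_eq_erase, sum_erase univ hi]

/-- The sub-stream rate chosen by one inner-loop step of Algorithm 1 when the remaining rate is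
`R'` and the residual uplink is `u`; the parameter `c` stands for `n - 2`. -/
noncomputable def stepRate (c R' u : ℝ) : ℝ :=
  if c * R' > u then u / c else R'

theorem stepRate_le {c : ℝ} (hc : 0 < c) (R' u : ℝ) : stepRate c R' u ≤ R' := by
  unfold stepRate
  split_ifs with h
  · exact ((div_lt_iff₀' hc).2 h).le
  · exact le_rfl

section Loops

variable {n : ℕ}

theorem innerLoop_cons_of_stepRate_eq {R' : ℝ} {U : Fin n → ℝ} {j : Fin n}
    (h : stepRate (n - 2) R' (U j) = R') (js : List (Fin n)) :
    (innerLoop n R' U (j :: js)).1 = Pi.single j R' := by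
  change (if R' - stepRate (n - 2) R' (U j) = 0 then _ else _ : _ × _).1 = _
  rw [if_pos (sub_eq_zero.2 h.symm)]
  exact congrArg (Function.update (0 : Fin n → ℝ) j) h

theorem innerLoop_cons_of_stepRate_ne {R' : ℝ} {U : Fin n → ℝ} {j : Fin n}
    (h : stepRate (n - 2) R' (U j) ≠ R') (js : List (Fin n)) :
    (innerLoop n R' U (j :: js)).1 =
      Function.update
        (innerLoop n (R' - stepRate (n - 2) R' (U j))
          (Function.update U j (U j - (n - 2) * stepRate (n - 2) R' (U j))) js).1
        j (stepRate (n - 2) R' (U j)) := by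
  change (if R' - stepRate (n - 2) R' (U j) = 0 then _ else _ : _ × _).1 = _
  rw [if_neg (sub_ne_zero.2 h.symm)]
  rfl

theorem innerLoop_apply_of_notMem {j : Fin n} {js : List (Fin n)} (hj : j ∉ js) (R' : ℝ)
    (U : Fin n → ℝ) : (innerLoop n R' U js).1 j = 0 := by
  induction js generalizing R' U with
  | nil => rfl
  | cons k js ih =>
    obtain ⟨hjk, hjs⟩ := List.ne_and_not_mem_of_not_mem_cons hj
    by_cases hexit : stepRate (n - 2) R' (U k) = R'
    · rw [innerLoop_cons_of_stepRate_eq hexit, Pi.single_eq_of_ne hjk]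
    · rw [innerLoop_cons_of_stepRate_ne hexit, Function.update_of_ne hjk, ih hjs]

theorem sum_innerLoop_le (hn : 3 ≤ n) {js : List (Fin n)} (hnodup : js.Nodup) (hne : js ≠ [])
    (R' : ℝ) (U : Fin n → ℝ) : ∑ j, (innerLoop n R' U js).1 j ≤ R' := by
  have hc : (0 : ℝ) < n - 2 := sub_pos.2 (by exact_mod_cast hn)
  induction js generalizing R' U with
  | nil => exact absurd rfl hne
  | cons j js ih =>
    obtain ⟨hj, hjs⟩ := List.nodup_cons.1 hnodup
    by_cases hexit : stepRate (n - 2) R' (U j) = R'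
    · simp only [innerLoop_cons_of_stepRate_eq hexit, Fintype.sum_pi_single', le_refl]
    rw [innerLoop_cons_of_stepRate_ne hexit,
      sum_update_of_eq_zero (innerLoop_apply_of_notMem hj _ _)]
    rcases eq_or_ne js [] with rfl | hjs_ne
    · simpa [innerLoop] using stepRate_le hc R' (U j)
    · exact le_sub_iff_add_le'.1 (ih hjs hjs_ne _ _)

theorem outerLoop_apply_of_notMem {i : Fin n} {is : List (Fin n)} (hi : i ∉ is) (R : Fin n → ℝ)
    (r : Fin n → Fin n → ℝ) (U : Fin n → ℝ) : (outerLoop n R r U is).1 i = r i := by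
  induction is generalizing r U with
  | nil => rfl
  | cons k is ih =>
    obtain ⟨hik, his⟩ := List.ne_and_not_mem_of_not_mem_cons hi
    rw [outerLoop, ih his, Function.update_of_ne hik]

theorem exists_outerLoop_apply_eq_innerLoop {i : Fin n} {is : List (Fin n)} (hi : i ∈ is)
    (R : Fin n → ℝ) (r : Fin n → Fin n → ℝ) (U : Fin n → ℝ) :
    ∃ V, (outerLoop n R r U is).1 i = (innerLoop n (R i) V (List.finRange n)).1 := by
  induction is generalizing r U with
  | nil => exact absurd hi List.not_mem_nil
  | cons k is ih =>
    rw [outerLoop]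
    by_cases his : i ∈ is
    · exact ih his _ _
    · obtain rfl : i = k := (List.mem_cons.1 hi).resolve_right his
      exact ⟨U, by rw [outerLoop_apply_of_notMem his, Function.update_self]⟩

end Loops

theorem no_overallocation_general (n : ℕ) (hn : 3 ≤ n) (Cu R : Fin n → ℝ) (i : Fin n) :
    ∑ j, algOutput n Cu R i j ≤ R i := by
  obtain ⟨V, hrow⟩ : ∃ V, algOutput n Cu R i = (innerLoop n (R i) V (List.finRange n)).1 :=
    exists_outerLoop_apply_eq_innerLoop (List.mem_finRange i) R _ _
  rw [hrow]
  exact sum_innerLoop_le hn (List.nodup_finRange n) (List.ne_nil_of_mem (List.mem_finRange i)) _ V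

/-- Assuming only `R j > 0` and `R j ≤ Cu j` for all `j`, the
rates assigned during each outer-loop iteration `i` never over-allocate the
stream: `∑_j r i j ≤ R i`. -/
theorem no_overallocation (n : ℕ) (hn : 3 ≤ n) (Cu R : Fin n → ℝ)
    (hCu : ∀ i, 0 < Cu i) (hR : ∀ i, 0 < R i)
    (hRCu : ∀ j, R j ≤ Cu j) :
    ∀ i : Fin n, ∑ j, algOutput n Cu R i j ≤ R i :=
  no_overallocation_general n hn Cu R
end
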